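/- Let S₁ and S₂ be numerical semigroups. If there is a monoid isomorphism between (I₀(S₁), +) and (I₀(S₂), +), i.e., a bijection φ : I₀(S₁) → I₀(S₂) with φ(I + J) = φ(I) + φ(J) for all I, J ∈ I₀(S₁) and φ(S₁) = S₂, then g(S₁) = g(S₂). -/

import Mathlib

/-!
The genus of `S` is read off from chains of idempotents of `I₀(S)`. If `E ⊆ F` in `I₀(S)` and
`F + F = F`, then `E + F = F`; an additive map preserves this equation, and `0 ∈ φ F` turns it back
into the inclusion `φ E ⊆ φ F`. For each gap `a` of `S`, the set `S ∪ [a, ∞)` is idempotent; these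
sets together with `S` form a strict chain of `g(S) + 1` sets, which an injective additive map sends
to a strict chain in `I₀(S')`. Every member of the image chain contains `S' = φ(S)`, so counting
complements gives `g(S) ≤ g(S')` (`genus_le_of_hom`). Applying this to an isomorphism and to its
inverse gives equality.
-/

open Set Pointwise

/-- A numerical semigroup: a subset of ℕ containing 0, closed under addition,
with finite complement. -/
def IsNumSgp (S : Set ℕ) : Prop :=
  0 ∈ S ∧ (∀ a ∈ S, ∀ b ∈ S, a + b ∈ S) ∧ Sᶜ.Finite

/-- The set of ideals of `S` whose smallest element is 0. -/
def I0 (S : Set ℕ) : Set (Set ℕ) :=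
  {E | 0 ∈ E ∧ E + S ⊆ E}

/-- The genus of `S`: the number of gaps. -/
noncomputable def genus (S : Set ℕ) : ℕ := Sᶜ.ncard

/-- Pseudo-Frobenius numbers of `S`. -/
def PFset (S : Set ℕ) : Set ℕ :=
  {f | f ∉ S ∧ ∀ s ∈ S, s ≠ 0 → f + s ∈ S}

/-- The type of `S`. -/
noncomputable def typeNS (S : Set ℕ) : ℕ := (PFset S).ncard

/-- The multiplicity of `S`: its least nonzero element. -/
noncomputable def mult (S : Set ℕ) : ℕ := sInf {n | n ∈ S ∧ n ≠ 0}

/-- `wElt E m i` is the least element of `E` congruent to `i` modulo `m`. -/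
noncomputable def wElt (E : Set ℕ) (m i : ℕ) : ℕ := sInf {e | e ∈ E ∧ e % m = i % m}

/-- The Frobenius number of `S`: the largest gap. -/
noncomputable def FrobN (S : Set ℕ) : ℕ := sSup Sᶜ

lemma self_mem_I0 {S : Set ℕ} (h : IsNumSgp S) : S ∈ I0 S := by
  refine ⟨h.1, ?_⟩
  rintro _ ⟨a, ha, b, hb, rfl⟩
  exact h.2.1 a ha b hb

lemma add_mem_I0 {S I J : Set ℕ} (hI : I ∈ I0 S) (hJ : J ∈ I0 S) : I + J ∈ I0 S := by
  refine ⟨⟨0, hI.1, 0, hJ.1, rfl⟩, ?_⟩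
  rw [add_assoc]
  exact Set.add_subset_add_left hJ.2

/-- An additive map preserves inclusions whose larger side is idempotent. -/
lemma map_subset_of_idem {S₁ S₂ : Set ℕ} {φ : Set ℕ → Set ℕ}
    (hmaps : Set.MapsTo φ (I0 S₁) (I0 S₂))
    (hadd : ∀ I ∈ I0 S₁, ∀ J ∈ I0 S₁, φ (I + J) = φ I + φ J)
    {E F : Set ℕ} (hE : E ∈ I0 S₁) (hF : F ∈ I0 S₁) (hEF : E ⊆ F) (hFF : F + F ⊆ F) :
    φ E ⊆ φ F := by
  have h : E + F = F := by
    apply Set.Subset.antisymm ((Set.add_subset_add_right hEF).trans hFF)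
    intro x hx
    exact ⟨0, hE.1, x, hx, by simp⟩
  intro x hx
  rw [← h, hadd E hE F hF]
  exact ⟨x, hx, 0, (hmaps hF).1, by simp⟩

/-- The numerical semigroup obtained from `S` by adjoining all integers `≥ a`. -/
def fillFrom (S : Set ℕ) (a : ℕ) : Set ℕ := S ∪ Set.Ici a

lemma fillFrom_add {S : Set ℕ} (h : IsNumSgp S) (a : ℕ) :
    fillFrom S a + fillFrom S a ⊆ fillFrom S a := by
  rintro _ ⟨x, hx, y, hy, rfl⟩
  have := h.2.1 x
  simp only [fillFrom, Set.mem_union, Set.mem_Ici] at *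
  grind

lemma fillFrom_mem_I0 {S : Set ℕ} (h : IsNumSgp S) (a : ℕ) : fillFrom S a ∈ I0 S :=
  ⟨Or.inl h.1, (Set.add_subset_add_left Set.subset_union_left).trans (fillFrom_add h a)⟩

/-- An injective additive map `I₀(S₁) → I₀(S₂)` preserving the identity forces
`g(S₁) ≤ g(S₂)`. -/
lemma genus_le_of_hom {S₁ S₂ : Set ℕ} (h₁ : IsNumSgp S₁) (h₂ : IsNumSgp S₂)
    {φ : Set ℕ → Set ℕ} (hmaps : Set.MapsTo φ (I0 S₁) (I0 S₂)) (hinj : Set.InjOn φ (I0 S₁))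
    (hadd : ∀ I ∈ I0 S₁, ∀ J ∈ I0 S₁, φ (I + J) = φ I + φ J)
    (hid : φ S₁ = S₂) : genus S₁ ≤ genus S₂ := by
  have hstrict : ∀ {E : Set ℕ} {a : ℕ}, E ∈ I0 S₁ → E ⊆ fillFrom S₁ a → a ∉ E →
      φ E ⊂ φ (fillFrom S₁ a) := by
    intro E a hE hsub ha
    refine (map_subset_of_idem hmaps hadd hE (fillFrom_mem_I0 h₁ a) hsub
      (fillFrom_add h₁ a)).ssubset_of_ne fun heq => ha ?_
    rw [hinj hE (fillFrom_mem_I0 h₁ a) heq]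
    exact Or.inr (Set.mem_Ici.2 le_rfl)
  have hS : ∀ a ∈ S₁ᶜ, S₂ ⊂ φ (fillFrom S₁ a) := fun a ha =>
    hid ▸ hstrict (self_mem_I0 h₁) Set.subset_union_left ha
  have hlt : ∀ a ∈ S₁ᶜ, ∀ b ∈ S₁ᶜ, a < b →
      (φ (fillFrom S₁ a))ᶜ.ncard < (φ (fillFrom S₁ b))ᶜ.ncard := by
    intro a ha b hb hab
    refine Set.ncard_lt_ncard (compl_lt_compl_iff_lt.2 (hstrict (fillFrom_mem_I0 h₁ b) ?_ ?_))
      (h₂.2.2.subset (Set.compl_subset_compl.2 (hS b hb).subset))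
    · exact Set.union_subset_union_right _ (Set.Ici_subset_Ici.2 hab.le)
    · rintro (h | h)
      · exact ha h
      · exact absurd (Set.mem_Ici.1 h) (not_le.2 hab)
  have key := Set.ncard_le_ncard_of_injOn (s := S₁ᶜ) (t := Set.Iio (genus S₂))
    (fun a => (φ (fillFrom S₁ a))ᶜ.ncard)
    (fun a ha => Set.ncard_lt_ncard (compl_lt_compl_iff_lt.2 (hS a ha)) h₂.2.2)
    (fun a ha b hb hab => by
      rcases lt_trichotomy a b with h | h | h
      · exact absurd hab (hlt a ha b hb h).ne
      · exact h
      · exact absurd hab (hlt b hb a ha h).ne')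
    (Set.finite_Iio _)
  simpa [genus, Set.ncard_eq_toFinset_card'] using key

theorem stmt_14 (S₁ S₂ : Set ℕ) (h₁ : IsNumSgp S₁) (h₂ : IsNumSgp S₂)
    (φ : Set ℕ → Set ℕ) (hbij : Set.BijOn φ (I0 S₁) (I0 S₂))
    (hadd : ∀ I ∈ I0 S₁, ∀ J ∈ I0 S₁, φ (I + J) = φ I + φ J)
    (hid : φ S₁ = S₂) :
    genus S₁ = genus S₂ := by
  apply le_antisymm (genus_le_of_hom h₁ h₂ hbij.mapsTo hbij.injOn hadd hid)
  have hinv := hbij.invOn_invFunOn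
  have hψ := hbij.surjOn.mapsTo_invFunOn
  refine genus_le_of_hom h₂ h₁ hψ hinv.2.injOn (fun I hI J hJ => ?_) ?_
  · apply hbij.injOn (hψ (add_mem_I0 hI hJ)) (add_mem_I0 (hψ hI) (hψ hJ))
    rw [hadd _ (hψ hI) _ (hψ hJ), hinv.2 hI, hinv.2 hJ, hinv.2 (add_mem_I0 hI hJ)]
  · rw [← hid]
    exact hinv.1 (self_mem_I0 h₁)
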